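/- arXiv:2406.18687 — 2 statements merged into one kernel-verified Lean document; each statement's English description precedes it below -/
import Mathlib

section
/- The dimension of the 2-swap algebra Σ_n, i.e., the subalgebra of End(V^⊗n) generated by the permutation operators where dim V = 2, equals the n-th Catalan number C_n = (1/(n+1))·binom(2n, n). -/
/-- The operator on `V^⊗n` (here realized as `(Fin n → Fin d) → ℂ`, `dim V = d`)
induced by a permutation `σ ∈ Sₙ` permuting the tensor factors. -/
def permOp (d n : ℕ) (σ : Equiv.Perm (Fin n)) :
    Module.End ℂ ((Fin n → Fin d) → ℂ) where
  toFun f := fun x => f (x ∘ σ)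
  map_add' _ _ := rfl
  map_smul' _ _ := rfl

open DyckStep in
/-- raising operator on functions of words -/
noncomputable def swE : (List DyckStep → ℂ) → List DyckStep → ℂ
  | _, [] => 0
  | f, D :: l => f (U :: l) + swE (fun t => f (D :: t)) l
  | f, U :: l => swE (fun t => f (U :: t)) l

theorem swE_add (l : List DyckStep) : ∀ f g : List DyckStep → ℂ,
    swE (f + g) l = swE f l + swE g l := by
  induction l with
  | nil => intro f g; simp [swE]
  | cons a l ih =>
    intro f g
    cases a
    · simp only [swE]
      exact ih _ _
    · simp only [swE]
      have := ih (fun t => f (DyckStep.D :: t)) (fun t => g (DyckStep.D :: t))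
      have e : (fun t => (f + g) (DyckStep.D :: t)) =
        (fun t => f (DyckStep.D :: t)) + (fun t => g (DyckStep.D :: t)) := rfl
      rw [e, this, Pi.add_apply]; ring

theorem swE_smul (c : ℂ) (l : List DyckStep) : ∀ f : List DyckStep → ℂ,
    swE (c • f) l = c * swE f l := by
  induction l with
  | nil => intro f; simp [swE]
  | cons a l ih =>
    intro f
    cases a
    · simp only [swE]
      exact ih _
    · simp only [swE]
      have := ih (fun t => f (DyckStep.D :: t))
      have e : (fun t => (c • f) (DyckStep.D :: t)) =
        c • (fun t => f (DyckStep.D :: t)) := rfl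
      rw [e, this, Pi.smul_apply, smul_eq_mul]; ring

noncomputable def swL : Module.End ℂ (List DyckStep → ℂ) where
  toFun := swE
  map_add' f g := funext fun l => swE_add l f g
  map_smul' c f := funext fun l => swE_smul c l f

noncomputable def swC (a : DyckStep) : Module.End ℂ (List DyckStep → ℂ) where
  toFun f := fun t => f (a :: t)
  map_add' _ _ := rfl
  map_smul' _ _ := rfl

theorem swC_U (f : List DyckStep → ℂ) :
    swC DyckStep.U (swL f) = swL (swC DyckStep.U f) := by
  funext l; rfl

theorem swC_D (f : List DyckStep → ℂ) :
    swC DyckStep.D (swL f) = swC DyckStep.U f + swL (swC DyckStep.D f) := by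
  funext l; rfl

theorem swC_U_pow (j : ℕ) : ∀ (f : List DyckStep → ℂ),
    swC DyckStep.U ((swL ^ j) f) = (swL ^ j) (swC DyckStep.U f) := by
  induction j with
  | zero => intro f; simp
  | succ j ih =>
    intro f
    rw [pow_succ, Module.End.mul_apply, ih, swC_U, Module.End.mul_apply]

theorem swC_D_pow (j : ℕ) : ∀ (f : List DyckStep → ℂ),
    swC DyckStep.D ((swL ^ (j+1)) f) = ((j : ℂ) + 1) • (swL ^ j) (swC DyckStep.U f)
      + (swL ^ (j+1)) (swC DyckStep.D f) := by
  induction j with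
  | zero => intro f; simp [swC_D]
  | succ j ih =>
    intro f
    rw [pow_succ, Module.End.mul_apply, ih, swC_U, swC_D, Module.End.mul_apply, map_add,
      ← Module.End.mul_apply _ swL, ← pow_succ]
    push_cast
    module

def swHt (w : List DyckStep) : ℤ := (w.count DyckStep.U : ℤ) - w.count DyckStep.D

theorem swHt_U (w : List DyckStep) : swHt (DyckStep.U :: w) = swHt w + 1 := by
  simp [swHt]; ring
theorem swHt_D (w : List DyckStep) : swHt (DyckStep.D :: w) = swHt w - 1 := by
  simp [swHt]; ring

def swZ (f : List DyckStep → ℂ) (m : ℕ) (h : ℤ) : Prop :=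
  ∀ w : List DyckStep, w.length = m → swHt w = h → f w = 0

theorem swZ_cons (f : List DyckStep → ℂ) (m : ℕ) (h : ℤ)
    (hU : swZ (swC DyckStep.U f) m (h - 1)) (hD : swZ (swC DyckStep.D f) m (h + 1)) :
    swZ f (m + 1) h := by
  rintro w hw hh
  match w, hw, hh with
  | DyckStep.U :: l, hw, hh =>
    rw [swHt_U] at hh
    exact hU l (by simpa using hw) (by omega)
  | DyckStep.D :: l, hw, hh =>
    rw [swHt_D] at hh
    exact hD l (by simpa using hw) (by omega)

theorem swZ_U {f : List DyckStep → ℂ} {m : ℕ} {h : ℤ} (hf : swZ f (m + 1) h) :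
    swZ (swC DyckStep.U f) m (h - 1) := fun l hl hh =>
  hf (DyckStep.U :: l) (by simpa using hl) (by rw [swHt_U]; omega)

theorem swZ_D {f : List DyckStep → ℂ} {m : ℕ} {h : ℤ} (hf : swZ f (m + 1) h) :
    swZ (swC DyckStep.D f) m (h + 1) := fun l hl hh =>
  hf (DyckStep.D :: l) (by simpa using hl) (by rw [swHt_D]; omega)

theorem swZ_add {f g : List DyckStep → ℂ} {m : ℕ} {h : ℤ} (hf : swZ f m h) (hg : swZ g m h) :
    swZ (f + g) m h := fun l hl hh => by simp [hf l hl hh, hg l hl hh]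

theorem swZ_smul {f : List DyckStep → ℂ} (c : ℂ) {m : ℕ} {h : ℤ} (hf : swZ f m h) :
    swZ (c • f) m h := fun l hl hh => by simp [hf l hl hh]

theorem swZ_L (m : ℕ) : ∀ (f : List DyckStep → ℂ) (h : ℤ), swZ f m h →
    swZ (swL f) m (h - 2) := by
  induction m with
  | zero =>
    intro f h _ w hw _
    rw [List.length_eq_zero_iff.mp hw]; rfl
  | succ m ih =>
    intro f h hf
    apply swZ_cons
    · rw [swC_U]
      have := ih _ _ (swZ_U hf)
      convert this using 1; ring
    · rw [swC_D]
      refine swZ_add ?_ ?_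
      · convert swZ_U hf using 1; ring
      · convert ih _ _ (swZ_D hf) using 1; ring

theorem swZ_Lpow (j : ℕ) (m : ℕ) : ∀ (f : List DyckStep → ℂ) (h : ℤ), swZ f m h →
    swZ ((swL ^ j) f) m (h - 2 * j) := by
  induction j with
  | zero => intro f h hf; simpa using hf
  | succ j ih =>
    intro f h hf
    rw [pow_succ, Module.End.mul_apply]
    convert ih _ _ (swZ_L m f h hf) using 1; push_cast; ring

theorem sw_inj (m : ℕ) : ∀ (f : List DyckStep → ℂ) (j : ℕ) (h : ℤ), (j : ℤ) ≤ h →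
    swZ ((swL ^ j) f) m (h - 2 * j) → swZ f m h := by
  induction m with
  | zero =>
    intro f j h hj hf w hw hh
    have hw' := List.length_eq_zero_iff.mp hw
    subst hw'
    simp [swHt] at hh
    have : j = 0 := by omega
    subst this
    exact hf [] rfl (by simp [swHt, ← hh])
  | succ m ih =>
    intro f j h hj hf
    match j, hj, hf with
    | 0, hj, hf => simpa using hf
    | k + 1, hj, hf =>
      have hU := swZ_U hf
      have hD := swZ_D hf
      rw [swC_U_pow] at hU
      rw [swC_D_pow] at hD
      have h1 : swZ (swC DyckStep.D f) m (h + 1) := by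
        apply ih _ (k + 2) _ (by push_cast at hj ⊢; omega)
        have e : (swL ^ (k+2)) (swC DyckStep.D f) =
          swL (((k : ℂ) + 1) • (swL ^ k) (swC DyckStep.U f)
            + (swL ^ (k+1)) (swC DyckStep.D f)) +
          (-((k : ℂ) + 1)) • (swL ^ (k+1)) (swC DyckStep.U f) := by
          rw [map_add, map_smul, pow_succ' swL (k+1), pow_succ' swL k,
            Module.End.mul_apply, Module.End.mul_apply]
          module
        rw [e]
        refine swZ_add ?_ (swZ_smul _ ?_)
        · convert swZ_L _ _ _ hD using 1; push_cast; ring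
        · convert hU using 1; push_cast; ring
      refine swZ_cons _ _ _ ?_ h1
      apply ih _ k _ (by push_cast at hj; omega)
      have e : (swL ^ k) (swC DyckStep.U f) = ((k : ℂ) + 1)⁻¹ •
          ((((k : ℂ) + 1) • (swL ^ k) (swC DyckStep.U f)
            + (swL ^ (k+1)) (swC DyckStep.D f)) + (-1 : ℂ) • (swL ^ (k+1)) (swC DyckStep.D f)) := by
        have : (k : ℂ) + 1 ≠ 0 := by exact_mod_cast Nat.succ_ne_zero k
        rw [neg_one_smul, add_neg_cancel_right, smul_smul, inv_mul_cancel₀ this, one_smul]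
      rw [e]
      refine swZ_smul _ (swZ_add ?_ (swZ_smul _ ?_))
      · convert hD using 1; push_cast; ring
      · convert swZ_Lpow (k+1) _ _ _ h1 using 1; push_cast; ring

def swGood : List DyckStep → Prop
  | [] => True
  | a :: l => swGood l ∧ swHt (a :: l) ≤ 0

theorem sw_good (m : ℕ) : ∀ (f : List DyckStep → ℂ) (h : ℤ),
    swZ (swL f) m (h - 2) →
    (∀ w : List DyckStep, w.length = m → swHt w = h → swGood w → f w = 0) → swZ f m h := by
  induction m with
  | zero =>
    intro f h _ hg w hw hh
    refine hg w hw hh ?_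
    rw [List.length_eq_zero_iff.mp hw]; trivial
  | succ m ih =>
    intro f h hf hg
    by_cases hh : 0 < h
    · exact sw_inj _ f 1 h (by push_cast; omega) (by simpa using hf)
    · have hU := swZ_U hf
      have hD := swZ_D hf
      rw [swC_U] at hU
      rw [swC_D] at hD
      have h1 : swZ (swC DyckStep.U f) m (h - 1) := by
        apply ih
        · convert hU using 1; ring
        · intro l hl hl' hgl
          have : swHt (DyckStep.U :: l) = h := by rw [swHt_U]; omega
          exact hg (DyckStep.U :: l) (by simpa using hl) this ⟨hgl, by omega⟩
      refine swZ_cons _ _ _ h1 ?_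
      apply ih
      · have e : swL (swC DyckStep.D f) = (swC DyckStep.U f + swL (swC DyckStep.D f)) +
          (-1 : ℂ) • swC DyckStep.U f := by module
        rw [e]
        refine swZ_add ?_ (swZ_smul _ ?_)
        · convert hD using 1; ring
        · convert h1 using 1; ring
      · intro l hl hl' hgl
        have : swHt (DyckStep.D :: l) = h := by rw [swHt_D]; omega
        exact hg (DyckStep.D :: l) (by simpa using hl) this ⟨hgl, by omega⟩

theorem swGood_drop : ∀ (w : List DyckStep) (i : ℕ), swGood w → swHt (w.drop i) ≤ 0
  | [], i, _ => by simp [swHt]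
  | a :: l, 0, h => h.2
  | a :: l, i + 1, h => by simpa using swGood_drop l i h.1

theorem swHt_append (u v : List DyckStep) : swHt (u ++ v) = swHt u + swHt v := by
  simp [swHt]; ring

theorem swGood_dyck (w : List DyckStep) (h : swGood w) (h0 : swHt w = 0) :
    ∃ p : DyckWord, p.toList = w := by
  refine ⟨⟨w, by simp only [swHt] at h0; omega, fun i => ?_⟩, rfl⟩
  have h1 := swHt_append (w.take i) (w.drop i)
  rw [List.take_append_drop, h0] at h1
  have := swGood_drop w i h
  have h2 : 0 ≤ swHt (w.take i) := by omega
  simp only [swHt] at h2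
  omega

theorem swE_sum (w : List DyckStep) : ∀ f : List DyckStep → ℂ, swE f w =
    ∑ i ∈ Finset.range w.length,
      if w[i]? = some DyckStep.D then f (w.set i DyckStep.U) else 0 := by
  induction w with
  | nil => intro f; simp [swE]
  | cons a l ih =>
    intro f
    rw [List.length_cons, Finset.sum_range_succ']
    cases a <;> simp [swE, ih, add_comm]

theorem sw_sum_double {M : Type*} [AddCommMonoid M] (g : ℕ → M) (n : ℕ) :
    ∑ i ∈ Finset.range (2 * n), g i = ∑ j ∈ Finset.range n, (g (2*j) + g (2*j+1)) := by
  induction n with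
  | zero => simp
  | succ n ih =>
    rw [Finset.sum_range_succ, ← ih, show 2 * (n+1) = 2*n+1+1 by ring, Finset.sum_range_succ,
      Finset.sum_range_succ, add_assoc]

def swX (n : ℕ) (w : List DyckStep) : Fin n → Fin 2 :=
  fun j => if w[2 * j.1]? = some DyckStep.U then 1 else 0

def swY (n : ℕ) (w : List DyckStep) : Fin n → Fin 2 :=
  fun j => if w[2 * j.1 + 1]? = some DyckStep.U then 0 else 1

noncomputable def swCoef {n : ℕ} (A : Module.End ℂ ((Fin n → Fin 2) → ℂ))
    (x y : Fin n → Fin 2) : ℂ := A (Pi.single y 1) x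

theorem swCoef_perm {n : ℕ} (σ : Equiv.Perm (Fin n)) (x y : Fin n → Fin 2) :
    swCoef (permOp 2 n σ) x y = if x ∘ σ = y then 1 else 0 := by
  simp [swCoef, permOp, Pi.single_apply]

theorem swCoef_comm {n : ℕ} (A : Module.End ℂ ((Fin n → Fin 2) → ℂ))
    (hA : A ∈ Submodule.span ℂ (Set.range (permOp 2 n))) (x y : Fin n → Fin 2) :
    ∑ j, (if x j = 0 then swCoef A (Function.update x j 1) y else 0) =
    ∑ j, (if y j = 1 then swCoef A x (Function.update y j 0) else 0) := by
  induction hA using Submodule.span_induction with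
  | mem A h =>
    obtain ⟨σ, rfl⟩ := h
    rw [← Equiv.sum_comp σ]
    refine Finset.sum_congr rfl fun j _ => ?_
    simp only [swCoef_perm]
    have e : Function.update x (σ j) 1 ∘ σ = Function.update (x ∘ σ) j 1 := by
      funext k
      simp [Function.update_apply]
    rw [e]
    by_cases h1 : x (σ j) = 0 <;> by_cases h2 : y j = 1
    · have : (Function.update (x ∘ σ) j 1 = y) ↔ (x ∘ σ = Function.update y j 0) := by
        constructor
        · rintro rfl; funext k; by_cases hk : k = j
          · subst hk; simp [h1]
          · simp [hk]
        · intro h; rw [h]; funext k; by_cases hk : k = j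
          · subst hk; simp [h2]
          · simp [hk]
      simp [h1, h2, this]
    · rw [if_pos h1, if_neg h2, if_neg]
      intro h; apply h2; rw [← h]; simp
    · rw [if_neg h1, if_pos h2, if_neg]
      intro h; apply h1; have := congrFun h j; simpa using this
    · simp [h1, h2]
  | zero => simp [swCoef]
  | add A B _ _ hA hB =>
    simp only [swCoef, LinearMap.add_apply, Pi.add_apply] at *
    simp only [ite_add_zero]
    rw [Finset.sum_add_distrib, Finset.sum_add_distrib, hA, hB]
  | smul c A _ hA =>
    simp only [swCoef, LinearMap.smul_apply, Pi.smul_apply] at *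
    simp only [← smul_ite_zero, ← Finset.smul_sum, hA]

noncomputable def swSgn {n : ℕ} (y : Fin n → Fin 2) : ℂ := ∏ j, if y j = 1 then (-1 : ℂ) else 1

theorem swSgn_ne {n : ℕ} (y : Fin n → Fin 2) : swSgn y ≠ 0 := by
  refine Finset.prod_ne_zero_iff.mpr fun j _ => ?_
  split_ifs <;> simp

theorem swSgn_update {n : ℕ} (y : Fin n → Fin 2) (j : Fin n) (h : y j = 1) :
    swSgn (Function.update y j 0) = - swSgn y := by
  unfold swSgn
  rw [← Finset.mul_prod_erase _ _ (Finset.mem_univ j), ← Finset.mul_prod_erase _ _ (Finset.mem_univ j)]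
  have : ∏ k ∈ Finset.univ.erase j, (if Function.update y j 0 k = 1 then (-1 : ℂ) else 1) =
      ∏ k ∈ Finset.univ.erase j, (if y k = 1 then (-1 : ℂ) else 1) := by
    refine Finset.prod_congr rfl fun k hk => ?_
    rw [Function.update_of_ne (Finset.ne_of_mem_erase hk)]
  rw [this]; simp [h]

noncomputable def swF {n : ℕ} (A : Module.End ℂ ((Fin n → Fin 2) → ℂ)) (w : List DyckStep) : ℂ :=
  swSgn (swY n w) * swCoef A (swX n w) (swY n w)

theorem sw_ne_U (a : DyckStep) : a = DyckStep.D ↔ ¬ a = DyckStep.U := by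
  cases a <;> simp

theorem swF_E {n : ℕ} (A : Module.End ℂ ((Fin n → Fin 2) → ℂ))
    (hA : A ∈ Submodule.span ℂ (Set.range (permOp 2 n))) (w : List DyckStep)
    (hw : w.length = 2 * n) : swE (swF A) w = 0 := by
  rw [swE_sum, hw, sw_sum_double, Finset.sum_range, Finset.sum_add_distrib]
  have key := swCoef_comm A hA (swX n w) (swY n w)
  have e1 : ∀ j : Fin n, (if w[2 * j.1]? = some DyckStep.D then
      swF A (w.set (2 * j.1) DyckStep.U) else 0) =
      swSgn (swY n w) * (if swX n w j = 0 then
        swCoef A (Function.update (swX n w) j 1) (swY n w) else 0) := by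
    intro j
    have hj : 2 * j.1 < w.length := by omega
    have hX : swX n (w.set (2 * j.1) DyckStep.U) = Function.update (swX n w) j 1 := by
      funext k
      by_cases hk : k = j
      · subst hk; simp [swX, hj]
      · have : 2 * j.1 ≠ 2 * k.1 := fun h => hk (Fin.ext (by omega))
        simp [swX, hk, List.getElem?_set, this]
    have hY : swY n (w.set (2 * j.1) DyckStep.U) = swY n w := by
      funext k
      have : 2 * j.1 ≠ 2 * k.1 + 1 := by omega
      simp [swY, List.getElem?_set, this]
    have hc : w[2 * j.1]? = some DyckStep.D ↔ swX n w j = 0 := by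
      simp [swX, hj, sw_ne_U]
    simp only [hc, swF, hX, hY, mul_ite, mul_zero]
  have e2 : ∀ j : Fin n, (if w[2 * j.1 + 1]? = some DyckStep.D then
      swF A (w.set (2 * j.1 + 1) DyckStep.U) else 0) =
      - swSgn (swY n w) * (if swY n w j = 1 then
        swCoef A (swX n w) (Function.update (swY n w) j 0) else 0) := by
    intro j
    have hj : 2 * j.1 + 1 < w.length := by omega
    have hY : swY n (w.set (2 * j.1 + 1) DyckStep.U) = Function.update (swY n w) j 0 := by
      funext k
      by_cases hk : k = j
      · subst hk; simp [swY, hj]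
      · have : 2 * j.1 ≠ 2 * k.1 := fun h => hk (Fin.ext (by omega))
        simp [swY, hk, List.getElem?_set, this]
    have hX : swX n (w.set (2 * j.1 + 1) DyckStep.U) = swX n w := by
      funext k
      have : 2 * j.1 + 1 ≠ 2 * k.1 := by omega
      simp [swX, List.getElem?_set, this]
    have hc : w[2 * j.1 + 1]? = some DyckStep.D ↔ swY n w j = 1 := by
      simp [swY, hj, sw_ne_U]
    simp only [hc, swF, hX, hY]
    split_ifs with h
    · rw [swSgn_update _ _ h]
    · simp
  rw [Finset.sum_congr rfl fun j _ => e1 j, Finset.sum_congr rfl fun j _ => e2 j,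
    ← Finset.mul_sum, ← Finset.mul_sum, key]
  ring

theorem sw_count_sum (w : List DyckStep) : w.count DyckStep.U =
    ∑ i ∈ Finset.range w.length, if w[i]? = some DyckStep.U then 1 else 0 := by
  induction w with
  | nil => simp
  | cons a l ih =>
    rw [List.length_cons, Finset.sum_range_succ']
    cases a <;> simp [ih]

theorem sw_length (w : List DyckStep) :
    w.count DyckStep.U + w.count DyckStep.D = w.length := by
  induction w with
  | nil => simp
  | cons a l ih => cases a <;> simp <;> omega

theorem sw_count_XY {n : ℕ} (w : List DyckStep) (hw : w.length = 2 * n) :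
    (w.count DyckStep.U : ℤ) = ∑ j, ((swX n w j).val : ℤ) + (n - ∑ j, ((swY n w j).val : ℤ)) := by
  rw [sw_count_sum, hw, sw_sum_double, Finset.sum_range]
  have : (n : ℤ) = ∑ j : Fin n, (1 : ℤ) := by simp
  rw [this, ← Finset.sum_sub_distrib, ← Finset.sum_add_distrib]
  push_cast
  refine Finset.sum_congr rfl fun j _ => ?_
  simp only [swX, swY]
  split_ifs <;> simp

theorem swCoef_unbal {n : ℕ} (A : Module.End ℂ ((Fin n → Fin 2) → ℂ))
    (hA : A ∈ Submodule.span ℂ (Set.range (permOp 2 n))) (w : List DyckStep)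
    (hw : w.length = 2 * n) (h : swHt w ≠ 0) : swCoef A (swX n w) (swY n w) = 0 := by
  induction hA using Submodule.span_induction with
  | mem A hm =>
    obtain ⟨σ, rfl⟩ := hm
    rw [swCoef_perm, if_neg]
    intro hs
    apply h
    have h1 := sw_count_XY w hw
    rw [← hs] at h1
    have h2 := Equiv.sum_comp σ fun j => ((swX n w j).val : ℤ)
    simp only [Function.comp] at h1
    have h3 := sw_length w
    simp only [swHt]
    omega
  | zero => simp [swCoef]
  | add A B _ _ hA hB =>
    simp only [swCoef, LinearMap.add_apply, Pi.add_apply] at *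
    rw [hA, hB, add_zero]
  | smul c A _ hA =>
    simp only [swCoef, LinearMap.smul_apply, Pi.smul_apply] at *
    rw [hA, smul_zero]

theorem sw_word {n : ℕ} (x y : Fin n → Fin 2) :
    ∃ w : List DyckStep, w.length = 2 * n ∧ swX n w = x ∧ swY n w = y := by
  refine ⟨List.ofFn fun i : Fin (2 * n) => if i.1 % 2 = 0 then
    (if x ⟨i.1 / 2, by omega⟩ = 1 then DyckStep.U else DyckStep.D) else
    (if y ⟨i.1 / 2, by omega⟩ = 0 then DyckStep.U else DyckStep.D), by simp, ?_, ?_⟩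
  · funext j
    have hj : 2 * j.1 < 2 * n := by omega
    simp [swX, List.getElem?_ofFn]
    generalize x j = t
    revert t; decide
  · funext j
    have hj : 2 * j.1 + 1 < 2 * n := by omega
    have h2 : (2 * j.1 + 1) / 2 = j.1 := by omega
    have h3 : (2 * j.1 + 1) % 2 = 1 := by omega
    simp [swY, List.getElem?_ofFn, hj, h2]
    generalize y j = t
    revert t; decide

theorem sw_upper {n : ℕ} (A : Module.End ℂ ((Fin n → Fin 2) → ℂ))
    (hA : A ∈ Submodule.span ℂ (Set.range (permOp 2 n)))
    (h : ∀ p : DyckWord, p.semilength = n → swCoef A (swX n p.toList) (swY n p.toList) = 0) :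
    A = 0 := by
  have hz : swZ (swF A) (2 * n) 0 := by
    apply sw_good
    · intro w hw _
      exact swF_E A hA w hw
    · intro w hw hh hg
      obtain ⟨p, rfl⟩ := swGood_dyck w hg hh
      have : p.semilength = n := by
        have := sw_length p.toList
        have h2 := p.count_U_eq_count_D
        unfold DyckWord.semilength
        omega
      simp [swF, h p this]
  have hall : ∀ x y, swCoef A x y = 0 := by
    intro x y
    obtain ⟨w, hw, rfl, rfl⟩ := sw_word x y
    by_cases h0 : swHt w = 0
    · have := hz w hw h0
      exact (mul_eq_zero.mp this).resolve_left (swSgn_ne _)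
    · exact swCoef_unbal A hA w hw h0
  apply (Pi.basisFun ℂ (Fin n → Fin 2)).ext
  intro y
  funext x
  simpa [swCoef] using hall x y

theorem sw_count_take (w : List DyckStep) : ∀ k, (w.take k).count DyckStep.U =
    ∑ i ∈ Finset.range k, if w[i]? = some DyckStep.U then 1 else 0 := by
  induction w with
  | nil => simp
  | cons a l ih =>
    intro k
    cases k with
    | zero => simp
    | succ k =>
      rw [Finset.sum_range_succ']
      cases a <;> simp [ih]

theorem sw_card_fin {n : ℕ} (P : ℕ → Prop) [DecidablePred P] (m : ℕ) (hm : m ≤ n) :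
    (Finset.univ.filter fun j : Fin n => j.1 < m ∧ P j.1).card =
      ∑ j ∈ Finset.range m, if P j then 1 else 0 := by
  rw [← Finset.card_filter]
  refine Finset.card_bij (fun j _ => j.1) ?_ ?_ ?_
  · intro j hj; simpa using hj
  · intro a _ b _ h; exact Fin.ext h
  · intro b hb
    simp at hb
    exact ⟨⟨b, by omega⟩, by simpa using hb, rfl⟩

def swN {n : ℕ} (x : Fin n → Fin 2) (m : ℕ) : ℕ :=
  (Finset.univ.filter fun j : Fin n => j.1 < m ∧ x j = 1).card

theorem sw_prefix {n : ℕ} (w : List DyckStep) (hw : w.length = 2 * n) (m : ℕ) (hm : m ≤ n) :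
    (w.take (2 * m)).count DyckStep.U + swN (swY n w) m = swN (swX n w) m + m := by
  have h1 : swN (swX n w) m =
      ∑ j ∈ Finset.range m, if w[2 * j]? = some DyckStep.U then 1 else 0 := by
    rw [← sw_card_fin _ m hm]
    unfold swN
    congr 1; ext j; simp [swX]
  have h2 : swN (swY n w) m =
      ∑ j ∈ Finset.range m, if ¬ w[2 * j + 1]? = some DyckStep.U then 1 else 0 := by
    rw [← sw_card_fin _ m hm]
    unfold swN
    congr 1; ext j; simp [swY]
  rw [h1, h2, sw_count_take, sw_sum_double, ← Finset.sum_add_distrib]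
  have : m = ∑ j ∈ Finset.range m, 1 := by simp
  conv_rhs => rw [this]
  simp only [Finset.sum_const, Finset.card_range, smul_eq_mul, mul_one]
  conv_rhs => enter [2]; rw [this]
  rw [← Finset.sum_add_distrib]
  refine Finset.sum_congr rfl fun j _ => ?_
  split_ifs <;> simp

theorem sw_dyck_cond {n : ℕ} (p : DyckWord) (hp : p.semilength = n) :
    p.toList.length = 2 * n ∧
    (∀ m ≤ n, swN (swY n p.toList) m ≤ swN (swX n p.toList) m) ∧
    (∀ m : Fin n, swX n p.toList m = 0 →
      swN (swY n p.toList) m.1 < swN (swX n p.toList) m.1) ∧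
    swN (swY n p.toList) n = swN (swX n p.toList) n := by
  have hl := sw_length p.toList
  have hb := p.count_U_eq_count_D
  unfold DyckWord.semilength at hp
  have hw : p.toList.length = 2 * n := by omega
  refine ⟨hw, ?_, ?_, ?_⟩
  · intro m hm
    have h1 := sw_prefix p.toList hw m hm
    have h2 := p.count_D_le_count_U (2 * m)
    have h3 := sw_length (p.toList.take (2 * m))
    rw [List.length_take, hw] at h3
    omega
  · intro m hx
    have h1 := sw_prefix p.toList hw m.1 m.2.le
    have h2 := p.count_D_le_count_U (2 * m.1 + 1)
    have h3 := sw_length (p.toList.take (2 * m.1 + 1))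
    rw [List.length_take, hw] at h3
    have h4 := sw_count_take p.toList (2 * m.1 + 1)
    rw [Finset.sum_range_succ, ← sw_count_take] at h4
    have h5 : ¬ p.toList[2 * m.1]? = some DyckStep.U := by
      intro h; simp [swX, h] at hx
    rw [if_neg h5] at h4
    have := m.2
    omega
  · have h1 := sw_prefix p.toList hw n le_rfl
    rw [List.take_of_length_le hw.le] at h1
    omega

theorem sw_fin2 (a : Fin 2) : a ≠ 1 ↔ a = 0 := by revert a; decide

theorem sw_sigma {n : ℕ} (x y : Fin n → Fin 2) (h1 : ∀ m ≤ n, swN y m ≤ swN x m)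
    (h2 : ∀ m : Fin n, x m = 0 → swN y m.1 < swN x m.1) (h3 : swN y n = swN x n) :
    ∃ σ : Equiv.Perm (Fin n), x ∘ σ = y ∧ (∀ i, y i = 1 → σ i ≤ i) ∧ (∀ i, y i = 0 → i < σ i) := by
  have hc : Fintype.card {j // y j = 1} = Fintype.card {j // x j = 1} := by
    rw [Fintype.card_subtype, Fintype.card_subtype]
    simpa [swN] using h3
  obtain ⟨e⟩ := Fintype.card_eq.mp hc
  have hτ : x ∘ e.extendSubtype = y := by
    funext j
    by_cases hj : y j = 1
    · have := e.extendSubtype_mem j hj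
      simp [this, hj]
    · have := e.extendSubtype_not_mem j hj
      replace hj := (sw_fin2 _).mp hj
      replace this := (sw_fin2 _).mp this
      simp [this, hj]
  have hs : y ∘ Tuple.sort y = x ∘ Tuple.sort x := by
    have := Tuple.comp_perm_comp_sort_eq_comp_sort (f := x) (σ := e.extendSubtype)
    rwa [hτ] at this
  let σ : Equiv.Perm (Fin n) := (Tuple.sort y).symm.trans (Tuple.sort x)
  have hσ : x ∘ σ = y := by
    funext j
    have := congrFun hs ((Tuple.sort y).symm j)
    simp at this
    simp [σ, this]
  have hmono : ∀ i j, y i = y j → i < j → σ i < σ j := by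
    intro i j hij hlt
    have sx := (Tuple.eq_sort_iff.mp (rfl : Tuple.sort x = Tuple.sort x)).2
    have sy := (Tuple.eq_sort_iff.mp (rfl : Tuple.sort y = Tuple.sort y)).2
    have hab : (Tuple.sort y).symm i < (Tuple.sort y).symm j := by
      rcases lt_trichotomy ((Tuple.sort y).symm i) ((Tuple.sort y).symm j) with h | h | h
      · exact h
      · exact absurd ((Tuple.sort y).symm.injective h) hlt.ne
      · have := sy _ _ h (by simp [hij])
        simp at this
        exact absurd hlt this.asymm
    refine sx _ _ hab ?_
    have a1 := congrFun hσ i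
    have a2 := congrFun hσ j
    simp only [Function.comp] at a1 a2
    exact a1.trans (hij.trans a2.symm)
  have hσ' : ∀ i, x (σ i) = y i := fun i => congrFun hσ i
  refine ⟨σ, hσ, ?_, ?_⟩
  · intro i hi
    by_contra hlt
    push Not at hlt
    have a := h1 (i.1 + 1) i.2
    have b : swN x (i.1 + 1) ≤ swN y i.1 := by
      unfold swN
      refine Finset.card_le_card_of_injOn σ.symm ?_ σ.symm.injective.injOn
      intro j hj
      simp at hj ⊢
      have hy : y (σ.symm j) = 1 := by rw [← hσ']; simpa using hj.2
      refine ⟨?_, hy⟩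
      by_contra hge
      push Not at hge
      have : σ i ≤ j := by
        rcases eq_or_lt_of_le hge with h | h
        · rw [h]; simp
        · have := hmono _ _ (hi.trans hy.symm) h
          simp at this; exact this.le
      have h7 : i.1 < j.1 := lt_of_lt_of_le hlt this
      omega
    have c : swN y i.1 < swN y (i.1 + 1) := by
      unfold swN
      apply Finset.card_lt_card
      rw [Finset.ssubset_iff_of_subset]
      · exact ⟨i, by simp [hi], by simp⟩
      · intro j hj
        simp at hj ⊢
        exact ⟨by have := hj.1; rw [Fin.lt_def] at this; omega, hj.2⟩
    omega
  · intro i hi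
    by_contra hle
    push Not at hle
    have a := h2 (σ i) (by rw [hσ', hi])
    have b : swN x (σ i).1 ≤ swN y (σ i).1 := by
      have key : ∀ z : Fin n → Fin 2, (Finset.univ.filter fun j : Fin n => j.1 < (σ i).1 ∧ z j = 0).card
          + swN z (σ i).1 = (Finset.univ.filter fun j : Fin n => j.1 < (σ i).1).card := by
        intro z
        unfold swN
        rw [← Finset.card_filter_add_card_filter_not (s := Finset.univ.filter fun j : Fin n => j.1 < (σ i).1) (fun j => z j = 0),
          Finset.filter_filter, Finset.filter_filter]
        congr 3
        ext j
        rw [← sw_fin2, not_not]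
      have kx := key x
      have ky := key y
      have : (Finset.univ.filter fun j : Fin n => j.1 < (σ i).1 ∧ y j = 0).card ≤
          (Finset.univ.filter fun j : Fin n => j.1 < (σ i).1 ∧ x j = 0).card := by
        refine Finset.card_le_card_of_injOn σ ?_ σ.injective.injOn
        intro j hj
        simp at hj ⊢
        refine ⟨hmono _ _ (hj.2.trans hi.symm) (lt_of_lt_of_le hj.1 hle), ?_⟩
        rw [hσ', hj.2]
      omega
    omega

def swW {n : ℕ} (x y : Fin n → Fin 2) : ℕ :=
  ∑ j, (if x j = 1 then 2 * j.1 else 0) + ∑ j, (if y j = 0 then 2 * j.1 + 1 else 0)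

theorem swW_eq {n : ℕ} (x y : Fin n → Fin 2) (σ : Equiv.Perm (Fin n)) (h : x ∘ σ = y) :
    swW x y = ∑ i, if y i = 1 then 2 * (σ i).1 else 2 * i.1 + 1 := by
  unfold swW
  rw [← Equiv.sum_comp σ, ← Finset.sum_add_distrib]
  refine Finset.sum_congr rfl fun i _ => ?_
  have : x (σ i) = y i := congrFun h i
  rw [this]
  by_cases hi : y i = 1
  · simp [hi]
  · have := (sw_fin2 _).mp hi
    simp [this]

theorem sw_tri {n : ℕ} (x y x' y' : Fin n → Fin 2) (σ : Equiv.Perm (Fin n)) (h : x ∘ σ = y)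
    (h1 : ∀ i, y i = 1 → σ i ≤ i) (h0 : ∀ i, y i = 0 → i < σ i) (h' : x' ∘ σ = y') :
    swW x y ≤ swW x' y' ∧ (swW x y = swW x' y' → x' = x ∧ y' = y) := by
  rw [swW_eq x y σ h, swW_eq x' y' σ h']
  have hle : ∀ i ∈ (Finset.univ : Finset (Fin n)), (if y i = 1 then 2 * (σ i).1 else 2 * i.1 + 1) ≤
      (if y' i = 1 then 2 * (σ i).1 else 2 * i.1 + 1) := by
    intro i _
    have a := h1 i
    have b := h0 i
    rw [← sw_fin2] at b
    rw [Fin.le_def] at a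
    rw [Fin.lt_def] at b
    split_ifs with u v v
    · exact le_rfl
    · have := a u; omega
    · have := b u; omega
    · exact le_rfl
  refine ⟨Finset.sum_le_sum hle, fun he => ?_⟩
  have he' := (Finset.sum_eq_sum_iff_of_le hle).mp he
  have hy : y' = y := by
    funext i
    have := he' i (Finset.mem_univ i)
    by_cases u : y i = 1 <;> by_cases v : y' i = 1
    · rw [u, v]
    · rw [if_pos u, if_neg v] at this; omega
    · rw [if_neg u, if_pos v] at this; omega
    · rw [(sw_fin2 _).mp u, (sw_fin2 _).mp v]
  refine ⟨?_, hy⟩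
  funext j
  have a := congrFun h (σ.symm j)
  have b := congrFun h' (σ.symm j)
  simp at a b
  rw [a, b, hy]

theorem sw_XY_inj {n : ℕ} (w w' : List DyckStep) (h : w.length = 2 * n) (h' : w'.length = 2 * n)
    (hX : swX n w = swX n w') (hY : swY n w = swY n w') : w = w' := by
  apply List.ext_getElem (h.trans h'.symm)
  intro i hi hi'
  have key : (w[i] = DyckStep.U ↔ w'[i] = DyckStep.U) := by
    rcases Nat.even_or_odd' i with ⟨j, rfl | rfl⟩
    · have := congrFun hX ⟨j, by omega⟩
      simp [swX, hi, hi'] at this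
      by_cases u : w[2 * j] = DyckStep.U <;> by_cases v : w'[2 * j] = DyckStep.U <;>
        simp [u, v] at this ⊢
    · have := congrFun hY ⟨j, by omega⟩
      simp [swY, hi, hi'] at this
      by_cases u : w[2 * j + 1] = DyckStep.U <;> by_cases v : w'[2 * j + 1] = DyckStep.U <;>
        simp [u, v] at this ⊢
  revert key
  generalize w[i] = a
  generalize w'[i] = b
  cases a <;> cases b <;> simp

noncomputable def swPhi (n : ℕ) : Submodule.span ℂ (Set.range (permOp 2 n)) →ₗ[ℂ]
    ({p : DyckWord // p.semilength = n} → ℂ) where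
  toFun A := fun p => swCoef A.1 (swX n p.1.toList) (swY n p.1.toList)
  map_add' _ _ := rfl
  map_smul' _ _ := rfl

theorem swPhi_inj (n : ℕ) : Function.Injective (swPhi n) := by
  intro A B h
  refine Subtype.ext (sub_eq_zero.mp (sw_upper (A.1 - B.1) (Submodule.sub_mem _ A.2 B.2) ?_))
  intro p hp
  have h1 : swCoef A.1 (swX n p.toList) (swY n p.toList) =
    swCoef B.1 (swX n p.toList) (swY n p.toList) := congrFun h ⟨p, hp⟩
  simp only [swCoef, LinearMap.sub_apply, Pi.sub_apply] at h1 ⊢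
  rw [h1, sub_self]

theorem sw_lower (n : ℕ) : catalan n ≤
    Module.finrank ℂ (Submodule.span ℂ (Set.range (permOp 2 n))) := by
  classical
  have hex : ∀ p : {p : DyckWord // p.semilength = n}, ∃ σ : Equiv.Perm (Fin n),
      swX n p.1.toList ∘ σ = swY n p.1.toList ∧ (∀ i, swY n p.1.toList i = 1 → σ i ≤ i) ∧
      (∀ i, swY n p.1.toList i = 0 → i < σ i) := fun p =>
    sw_sigma _ _ (sw_dyck_cond p.1 p.2).2.1 (sw_dyck_cond p.1 p.2).2.2.1
      (sw_dyck_cond p.1 p.2).2.2.2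
  choose σ hσ h1 h0 using hex
  let b : {p : DyckWord // p.semilength = n} → ℕ := fun p => swW (swX n p.1.toList) (swY n p.1.toList)
  let v : {p : DyckWord // p.semilength = n} → Submodule.span ℂ (Set.range (permOp 2 n)) :=
    fun p => ⟨permOp 2 n (σ p), Submodule.subset_span ⟨σ p, rfl⟩⟩
  let M : Matrix {p : DyckWord // p.semilength = n} {p : DyckWord // p.semilength = n} ℂ :=
    fun p q => swPhi n (v p) q
  have hM : ∀ p q, M p q = if swX n q.1.toList ∘ σ p = swY n q.1.toList then 1 else 0 :=
    fun p q => swCoef_perm _ _ _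
  have hT : M.BlockTriangular b := by
    intro p q hlt
    rw [hM, if_neg]
    intro h
    have := (sw_tri _ _ _ _ (σ p) (hσ p) (h1 p) (h0 p) h).1
    exact absurd hlt (not_lt.mpr this)
  have hdet : M.det = 1 := by
    rw [hT.det]
    refine Finset.prod_eq_one fun a _ => ?_
    have : M.toSquareBlock b a = 1 := by
      ext p q
      rw [Matrix.toSquareBlock_def, Matrix.of_apply, hM, Matrix.one_apply]
      by_cases hpq : p = q
      · subst hpq; rw [if_pos rfl, if_pos (hσ p.1)]
      · rw [if_neg hpq, if_neg]
        intro h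
        have := (sw_tri _ _ _ _ (σ p.1) (hσ p.1) (h1 p.1) (h0 p.1) h).2 (p.2.trans q.2.symm)
        apply hpq
        apply Subtype.ext; apply Subtype.ext
        apply DyckWord.ext
        exact sw_XY_inj (n := n) _ _ (sw_dyck_cond p.1.1 p.1.2).1 (sw_dyck_cond q.1.1 q.1.2).1
          this.1.symm this.2.symm
    rw [this, Matrix.det_one]
  have hli : LinearIndependent ℂ M.row :=
    Matrix.linearIndependent_rows_of_det_ne_zero (A := M) (by rw [hdet]; exact one_ne_zero)
  have hv : LinearIndependent ℂ v := LinearIndependent.of_comp (swPhi n) hli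
  have := hv.fintype_card_le_finrank
  rwa [DyckWord.card_dyckWord_semilength_eq_catalan] at this

theorem sw_upper' (n : ℕ) :
    Module.finrank ℂ (Submodule.span ℂ (Set.range (permOp 2 n))) ≤ catalan n := by
  have := LinearMap.finrank_le_finrank_of_injective (swPhi_inj n)
  rwa [Module.finrank_fintype_fun_eq_card, DyckWord.card_dyckWord_semilength_eq_catalan] at this

/-- The 2-swap algebra `Σₙ`, the span in `End(V^⊗n)` (`dim V = 2`) of the operators
induced by permutations, has dimension the `n`-th Catalan number `C_n`. -/
theorem swapAlgebra_dim_eq_catalan (n : ℕ) :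
    Module.finrank ℂ (Submodule.span ℂ (Set.range (permOp 2 n))) = catalan n := by
  exact le_antisymm (sw_upper' n) (sw_lower n)
end

section
/- For every n, the swap algebra Σ_n (dim V = 2) is spanned by the operators induced by special permutations: those whose cycle decomposition consists only of cycles of length 1 and 2, together with at most one cycle of length 3. -/
/-- A permutation is special if all its cycles have length at most 2 (fixed points and
transpositions) together with at most one 3-cycle. -/
def IsSpecial {n : ℕ} (τ : Equiv.Perm (Fin n)) : Prop :=
  (∀ i ∈ τ.cycleType, i ≤ 3) ∧ Multiset.count 3 τ.cycleType ≤ 1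

open Equiv

/-- the antisymmetrizer relation -/
def SwRel {α N : Type*} [DecidableEq α] [AddCommGroup N] (w : Perm α → N) : Prop :=
  ∀ (g h : Perm α) (p q r : α), p ≠ q → q ≠ r → p ≠ r →
    w (g * h) + w (g * (swap p q * swap q r) * h) + w (g * (swap q r * swap p q) * h)
      = w (g * swap p q * h) + w (g * swap q r * h) + w (g * swap p r * h)

theorem SwRel.conj {α N : Type*} [DecidableEq α] [AddCommGroup N] {w : Perm α → N}
    (hw : SwRel w) (π : Perm α) : SwRel (fun g => w (π * g * π⁻¹)) := by
  intro g h p q r h1 h2 h3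
  have := hw (π * g) (h * π⁻¹) p q r h1 h2 h3
  simpa only [mul_assoc] using this

theorem conj_swap {α : Type*} [DecidableEq α] (π : Perm α) (a b : α) :
    π * swap a b * π⁻¹ = swap (π a) (π b) := by
  rw [Equiv.mul_swap_eq_swap_mul, mul_assoc, mul_inv_cancel, mul_one]

theorem four_step {N : Type*} [AddCommGroup N] (w : Perm (Fin 4) → N)
    (hw : SwRel w) (h2 : ∀ a b c d, w (swap a b * swap c d) = 0) :
    w (swap 0 1 * swap 1 2 * swap 2 3) +
      w (swap 2 3 * (swap 0 1 * swap 1 2 * swap 2 3) * (swap 2 3)⁻¹) = 0 := by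
  have := hw (swap 0 1 * swap 1 2 * swap 2 3) 1 1 2 3 (by decide) (by decide) (by decide)
  rw [show swap (0 : Fin 4) 1 * swap 1 2 * swap 2 3 * (swap 1 2 * swap 2 3) * 1 =
      swap 2 3 * (swap 0 1 * swap 1 2 * swap 2 3) * (swap 2 3)⁻¹ by decide,
    show swap (0 : Fin 4) 1 * swap 1 2 * swap 2 3 * (swap 2 3 * swap 1 2) * 1 =
      swap 0 1 * swap 0 0 by decide,
    show swap (0 : Fin 4) 1 * swap 1 2 * swap 2 3 * (swap 1 2) * 1 =
      swap 0 1 * swap 1 3 by decide,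
    show swap (0 : Fin 4) 1 * swap 1 2 * swap 2 3 * (swap 2 3) * 1 =
      swap 0 1 * swap 1 2 by decide,
    show swap (0 : Fin 4) 1 * swap 1 2 * swap 2 3 * (swap 1 3) * 1 =
      swap 0 1 * swap 2 3 by decide] at this
  rw [h2, h2, h2, h2] at this
  simpa using this

theorem four_abs {N : Type*} [AddCommGroup N] [Module ℂ N] (w : Perm (Fin 4) → N)
    (hw : SwRel w) (h2 : ∀ a b c d, w (swap a b * swap c d) = 0) :
    w (swap 0 1 * swap 1 2 * swap 2 3) = 0 := by
  have key : ∀ π : Perm (Fin 4), w (π * (swap 0 1 * swap 1 2 * swap 2 3) * π⁻¹) +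
      w (π * (swap 2 3 * (swap 0 1 * swap 1 2 * swap 2 3) * (swap 2 3)⁻¹) * π⁻¹) = 0 := by
    intro π
    refine four_step _ (hw.conj π) ?_
    intro a b c d
    have : π * (swap a b * swap c d) * π⁻¹ = swap (π a) (π b) * swap (π c) (π d) := by
      rw [← conj_swap, ← conj_swap]; group
    rw [this, h2]
  have e0 := key 1
  have e1 := key (swap 2 3 * (swap 0 1 * swap 1 2 * swap 2 3))
  have e2 := key ((swap 2 3 * (swap 0 1 * swap 1 2 * swap 2 3)) ^ 2)
  generalize hc : swap (0 : Fin 4) 1 * swap 1 2 * swap 2 3 = c at *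
  generalize hs : swap (2 : Fin 4) 3 = s at *
  have h3 : (s * c) ^ 3 = 1 := by subst hc hs; decide
  have f1 : 1 * (s * c * s⁻¹) * 1⁻¹ = (s * c) * c * (s * c)⁻¹ := by group
  have f2 : (s * c) * (s * c * s⁻¹) * (s * c)⁻¹ = (s * c) ^ 2 * c * ((s * c) ^ 2)⁻¹ := by
    rw [pow_two]; group
  have f3 : (s * c) ^ 2 * (s * c * s⁻¹) * ((s * c) ^ 2)⁻¹ =
      (s * c) ^ 3 * c * ((s * c) ^ 3)⁻¹ := by
    simp only [pow_succ, pow_zero]; group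
  rw [f1] at e0
  rw [f2] at e1
  rw [f3, h3] at e2
  simp only [one_mul, inv_one, mul_one] at e0 e1 e2
  have : (2 : ℂ) • w c = 0 := by
    rw [two_smul]
    calc w c + w c = (w c + w (s * c * c * (s * c)⁻¹))
          - (w (s * c * c * (s * c)⁻¹) + w ((s * c) ^ 2 * c * ((s * c) ^ 2)⁻¹))
          + (w ((s * c) ^ 2 * c * ((s * c) ^ 2)⁻¹) + w c) := by abel
      _ = 0 := by rw [e0, e1, e2]; simp
  simpa using this

/-- transport along an embedding -/
theorem viaEmb_swap {α β : Type*} [DecidableEq α] [DecidableEq β] (ι : α ↪ β) (a b : α) :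
    Perm.viaEmbeddingHom ι (swap a b) = swap (ι a) (ι b) := by
  ext x
  rw [Perm.viaEmbeddingHom_apply]
  by_cases hx : x ∈ Set.range ι
  · obtain ⟨y, rfl⟩ := hx
    rw [Perm.viaEmbedding_apply, ι.injective.swap_apply]
  · rw [Perm.viaEmbedding_apply_of_notMem _ _ _ hx, swap_apply_of_ne_of_ne]
    · rintro rfl; exact hx ⟨_, rfl⟩
    · rintro rfl; exact hx ⟨_, rfl⟩

theorem SwRel.comp {α β N : Type*} [DecidableEq α] [DecidableEq β] [AddCommGroup N]
    {w : Perm β → N} (hw : SwRel w) (ι : α ↪ β) (ρ : Perm β) :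
    SwRel (fun g => w (Perm.viaEmbeddingHom ι g * ρ)) := by
  intro g h p q r h1 h2 h3
  have := hw (Perm.viaEmbeddingHom ι g) (Perm.viaEmbeddingHom ι h * ρ) (ι p) (ι q) (ι r)
    (ι.injective.ne h1) (ι.injective.ne h2) (ι.injective.ne h3)
  simpa only [map_mul, viaEmb_swap, mul_assoc] using this

theorem four_gen {β N : Type*} [DecidableEq β] [AddCommGroup N] [Module ℂ N]
    (w : Perm β → N) (hw : SwRel w) (ρ : Perm β)
    (h2 : ∀ a b c d, w (swap a b * swap c d * ρ) = 0)
    (ι : Fin 4 ↪ β) :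
    w (swap (ι 0) (ι 1) * swap (ι 1) (ι 2) * swap (ι 2) (ι 3) * ρ) = 0 := by
  have := four_abs _ (hw.comp ι ρ) (by
    intro a b c d
    simpa only [map_mul, viaEmb_swap] using h2 (ι a) (ι b) (ι c) (ι d))
  simpa only [map_mul, viaEmb_swap] using this

theorem six_step {N : Type*} [AddCommGroup N] (w : Perm (Fin 6) → N)
    (hw : SwRel w) (h3 : ∀ a b c d e f, w (swap a b * swap c d * swap e f) = 0)
    (h4 : ∀ (ι : Fin 4 ↪ Fin 6) (a b : Fin 6),
      w (swap (ι 0) (ι 1) * swap (ι 1) (ι 2) * swap (ι 2) (ι 3) * swap a b) = 0) :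
    w (swap 0 1 * swap 1 2 * swap 2 3 * swap 3 4 * swap 4 5) +
      w (swap 4 5 * (swap 0 1 * swap 1 2 * swap 2 3 * swap 3 4 * swap 4 5)
        * (swap 4 5)⁻¹) = 0 := by
  have := hw (swap 0 1 * swap 1 2 * swap 2 3 * swap 3 4 * swap 4 5) 1 3 4 5
    (by decide) (by decide) (by decide)
  have hi := fun a b => h4 ⟨![0, 1, 2, 3], by decide⟩ a b
  simp only [Function.Embedding.coeFn_mk, Matrix.cons_val] at hi
  rw [show swap (0 : Fin 6) 1 * swap 1 2 * swap 2 3 * swap 3 4 * swap 4 5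
        * (swap 3 4 * swap 4 5) * 1 =
      swap 4 5 * (swap 0 1 * swap 1 2 * swap 2 3 * swap 3 4 * swap 4 5) * (swap 4 5)⁻¹ by
        decide,
    show swap (0 : Fin 6) 1 * swap 1 2 * swap 2 3 * swap 3 4 * swap 4 5
        * (swap 4 5 * swap 3 4) * 1 =
      swap 0 1 * swap 1 2 * swap 2 3 by decide,
    show swap (0 : Fin 6) 1 * swap 1 2 * swap 2 3 * swap 3 4 * swap 4 5
        * (swap 3 4) * 1 =
      swap 0 1 * swap 1 2 * swap 2 3 * swap 3 5 by decide,
    show swap (0 : Fin 6) 1 * swap 1 2 * swap 2 3 * swap 3 4 * swap 4 5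
        * (swap 4 5) * 1 =
      swap 0 1 * swap 1 2 * swap 2 3 * swap 3 4 by decide,
    show swap (0 : Fin 6) 1 * swap 1 2 * swap 2 3 * swap 3 4 * swap 4 5
        * (swap 3 5) * 1 =
      swap 0 1 * swap 1 2 * swap 2 3 * swap 4 5 by decide, h3, hi, hi, hi] at this
  simpa using this

set_option maxRecDepth 100000 in
theorem six_cycle {N : Type*} [AddCommGroup N] [Module ℂ N] (w : Perm (Fin 6) → N)
    (hw : SwRel w) (h3 : ∀ a b c d e f, w (swap a b * swap c d * swap e f) = 0)
    (h4 : ∀ (ι : Fin 4 ↪ Fin 6) (a b : Fin 6),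
      w (swap (ι 0) (ι 1) * swap (ι 1) (ι 2) * swap (ι 2) (ι 3) * swap a b) = 0)
    (τ : Perm (Fin 6)) :
    w (τ * (swap 0 1 * swap 1 2 * swap 2 3 * swap 3 4 * swap 4 5) * τ⁻¹) = 0 := by
  have key : ∀ π : Perm (Fin 6),
      w (π * (swap 0 1 * swap 1 2 * swap 2 3 * swap 3 4 * swap 4 5) * π⁻¹) +
      w (π * (swap 4 5 * (swap 0 1 * swap 1 2 * swap 2 3 * swap 3 4 * swap 4 5)
        * (swap 4 5)⁻¹) * π⁻¹) = 0 := by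
    intro π
    refine six_step _ (hw.conj π) ?_ ?_
    · intro a b c d e f
      have : π * (swap a b * swap c d * swap e f) * π⁻¹ =
          swap (π a) (π b) * swap (π c) (π d) * swap (π e) (π f) := by
        rw [← conj_swap, ← conj_swap, ← conj_swap]; group
      rw [this, h3]
    · intro ι a b
      have : π * (swap (ι 0) (ι 1) * swap (ι 1) (ι 2) * swap (ι 2) (ι 3) * swap a b) * π⁻¹ =
          swap (π (ι 0)) (π (ι 1)) * swap (π (ι 1)) (π (ι 2)) * swap (π (ι 2)) (π (ι 3))
            * swap (π a) (π b) := by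
        rw [← conj_swap, ← conj_swap, ← conj_swap, ← conj_swap]; group
      rw [this]
      exact h4 (ι.trans π.toEmbedding) _ _
  generalize hc : swap (0 : Fin 6) 1 * swap 1 2 * swap 2 3 * swap 3 4 * swap 4 5 = c at *
  generalize hs : swap (4 : Fin 6) 5 = s at *
  have h5 : (s * c) ^ 5 = 1 := by
    subst hc hs
    simp only [pow_succ, pow_zero]
    decide
  have st : ∀ i : ℕ, w (τ * (s * c) ^ i * c * (τ * (s * c) ^ i)⁻¹) +
      w (τ * (s * c) ^ (i + 1) * c * (τ * (s * c) ^ (i + 1))⁻¹) = 0 := by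
    intro i
    have := key (τ * (s * c) ^ i)
    rwa [show τ * (s * c) ^ i * (s * c * s⁻¹) * (τ * (s * c) ^ i)⁻¹ =
      τ * (s * c) ^ (i + 1) * c * (τ * (s * c) ^ (i + 1))⁻¹ by
        rw [pow_succ]; group] at this
  have e0 := st 0
  have e1 := st 1
  have e2 := st 2
  have e3 := st 3
  have e4 := st 4
  simp only [zero_add, Nat.reduceAdd, h5, pow_zero, mul_one] at e0 e1 e2 e3 e4
  have : (2 : ℂ) • w (τ * c * τ⁻¹) = 0 := by
    rw [two_smul]
    generalize w (τ * c * τ⁻¹) = x0 at *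
    rw [eq_neg_of_add_eq_zero_right e0] at e1
    rw [← sub_eq_neg_add, sub_eq_zero] at e1
    rw [e1] at e2
    rw [eq_neg_of_add_eq_zero_right e2] at e3
    rw [← sub_eq_neg_add, sub_eq_zero] at e3
    rw [e3] at e4
    exact e4
  simpa using this

theorem six_abs {N : Type*} [AddCommGroup N] [Module ℂ N] (w : Perm (Fin 6) → N)
    (hw : SwRel w) (h3 : ∀ a b c d e f, w (swap a b * swap c d * swap e f) = 0) :
    w (swap 0 1 * swap 1 2 * swap 3 4 * swap 4 5) = 0 := by
  have h4 : ∀ (ι : Fin 4 ↪ Fin 6) (a b : Fin 6),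
      w (swap (ι 0) (ι 1) * swap (ι 1) (ι 2) * swap (ι 2) (ι 3) * swap a b) = 0 :=
    fun ι a b => four_gen w hw (swap a b) (fun _ _ _ _ => h3 _ _ _ _ _ _) ι
  have c1 := six_cycle w hw h3 h4 1
  have c2 := six_cycle w hw h3 h4 (swap 3 4 * swap 4 5)
  have := hw (swap 0 1 * swap 1 2 * swap 2 3 * swap 3 4 * swap 4 5) 1 2 3 5
    (by decide) (by decide) (by decide)
  have hi := fun a b => h4 ⟨![0, 1, 2, 3], by decide⟩ a b
  have hi' := fun a b => h4 ⟨![0, 1, 2, 4], by decide⟩ a b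
  simp only [Function.Embedding.coeFn_mk, Matrix.cons_val] at hi hi'
  rw [show swap (0 : Fin 6) 1 * swap 1 2 * swap 2 3 * swap 3 4 * swap 4 5
        * (swap 2 3 * swap 3 5) * 1 =
      (swap 3 4 * swap 4 5) * (swap 0 1 * swap 1 2 * swap 2 3 * swap 3 4 * swap 4 5)
        * (swap 3 4 * swap 4 5)⁻¹ by decide,
    show swap (0 : Fin 6) 1 * swap 1 2 * swap 2 3 * swap 3 4 * swap 4 5
        * (swap 3 5 * swap 2 3) * 1 =
      swap 0 1 * swap 1 2 * swap 4 5 by decide,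
    show swap (0 : Fin 6) 1 * swap 1 2 * swap 2 3 * swap 3 4 * swap 4 5
        * (swap 2 3) * 1 =
      swap 0 1 * swap 1 2 * swap 2 4 * swap 4 5 by decide,
    show swap (0 : Fin 6) 1 * swap 1 2 * swap 2 3 * swap 3 4 * swap 4 5
        * (swap 3 5) * 1 =
      swap 0 1 * swap 1 2 * swap 2 3 * swap 4 5 by decide,
    show swap (0 : Fin 6) 1 * swap 1 2 * swap 2 3 * swap 3 4 * swap 4 5
        * (swap 2 5) * 1 =
      swap 0 1 * swap 1 2 * swap 3 4 * swap 4 5 by decide, h3, hi, hi', c2] at this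
  rw [show ∀ x : Perm (Fin 6), 1 * x * 1⁻¹ = x * 1 by intro x; simp] at c1
  rw [c1] at this
  simpa using this.symm

theorem six_gen {β N : Type*} [DecidableEq β] [AddCommGroup N] [Module ℂ N]
    (w : Perm β → N) (hw : SwRel w) (ρ : Perm β)
    (h3 : ∀ a b c d e f, w (swap a b * swap c d * swap e f * ρ) = 0)
    (ι : Fin 6 ↪ β) :
    w (swap (ι 0) (ι 1) * swap (ι 1) (ι 2) * swap (ι 3) (ι 4) * swap (ι 4) (ι 5) * ρ) = 0 := by
  have := six_abs _ (hw.comp ι ρ) (by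
    intro a b c d e f
    simpa only [map_mul, viaEmb_swap] using h3 (ι a) (ι b) (ι c) (ι d) (ι e) (ι f))
  simpa only [map_mul, viaEmb_swap] using this

theorem permOp_mul (n : ℕ) (σ τ : Perm (Fin n)) :
    permOp 2 n (σ * τ) = permOp 2 n σ * permOp 2 n τ := rfl

theorem permOp_rel (n : ℕ) : SwRel (permOp 2 n) := by
  have base : ∀ p q r : Fin n, p ≠ q → q ≠ r → p ≠ r →
      permOp 2 n 1 + permOp 2 n (swap p q * swap q r) + permOp 2 n (swap q r * swap p q)
        = permOp 2 n (swap p q) + permOp 2 n (swap q r) + permOp 2 n (swap p r) := by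
    intro p q r h1 h2 h3
    have E : ∀ (x : Fin n → Fin 2) (a b : Fin n), x a = x b → x ∘ swap a b = x := by
      intro x a b h
      funext y
      simp only [Function.comp]
      rcases eq_or_ne y a with rfl | ha
      · simp [h]
      rcases eq_or_ne y b with rfl | hb
      · simp [h]
      rw [swap_apply_of_ne_of_ne ha hb]
    have g1 : swap p q * swap q r = swap q r * swap p r := by
      rw [swap_mul_eq_mul_swap, swap_inv, swap_apply_left, swap_apply_of_ne_of_ne h1 h3]
    have g2 : swap q r * swap p q = swap p r * swap q r := by
      rw [mul_swap_eq_swap_mul, swap_apply_left, swap_apply_of_ne_of_ne h1 h3]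
    have g3 : swap p q * swap q r = swap p r * swap p q := by
      rw [mul_swap_eq_swap_mul, swap_apply_right, swap_apply_of_ne_of_ne h3.symm h2.symm]
    have g4 : swap q r * swap p q = swap p q * swap p r := by
      rw [swap_mul_eq_mul_swap, swap_inv, swap_apply_right,
        swap_apply_of_ne_of_ne h3.symm h2.symm]
    refine LinearMap.ext fun f => funext fun x => ?_
    change f (x ∘ (1 : Perm (Fin n))) + f (x ∘ (swap p q * swap q r : Perm (Fin n)))
      + f (x ∘ (swap q r * swap p q : Perm (Fin n)))
      = f (x ∘ swap p q) + f (x ∘ swap q r) + f (x ∘ swap p r)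
    have h : x p = x q ∨ x q = x r ∨ x p = x r := by omega
    rcases h with h | h | h
    · rw [g4]
      simp only [Perm.coe_mul, ← Function.comp_assoc, E x _ _ h, Perm.coe_one,
        Function.comp_id]
    · rw [g1]
      simp only [Perm.coe_mul, ← Function.comp_assoc, E x _ _ h, Perm.coe_one,
        Function.comp_id]
      ring
    · rw [g2, g3]
      simp only [Perm.coe_mul, ← Function.comp_assoc, E x _ _ h, Perm.coe_one,
        Function.comp_id]
      ring
  intro g h p q r h1 h2 h3
  have := congrArg (fun X => permOp 2 n g * X * permOp 2 n h) (base p q r h1 h2 h3)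
  simpa only [mul_add, add_mul, ← permOp_mul, mul_one] using this

/-- functions invariant under a permutation; its dimension is the number of cycles -/
def fixS {n : ℕ} (σ : Perm (Fin n)) : Submodule ℚ (Fin n → ℚ) where
  carrier := {f | ∀ x, f (σ x) = f x}
  add_mem' := by
    intro f g hf hg x
    simp only [Pi.add_apply, hf x, hg x]
  zero_mem' := by intro x; rfl
  smul_mem' := by
    intro c f hf x
    simp only [Pi.smul_apply, hf x]

/-- number of cycles -/
noncomputable def cN {n : ℕ} (σ : Perm (Fin n)) : ℕ := Module.finrank ℚ (fixS σ)

theorem cN_le {n : ℕ} (σ : Perm (Fin n)) : cN σ ≤ n := by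
  have := Submodule.finrank_le (fixS σ)
  simpa [cN] using this

theorem fix_swap_aux {n : ℕ} {f : Fin n → ℚ} {a b : Fin n} (h : f a = f b) (y : Fin n) :
    f (swap a b y) = f y := by
  rcases eq_or_ne y a with rfl | ha
  · simp [h]
  rcases eq_or_ne y b with rfl | hb
  · simp [h]
  rw [swap_apply_of_ne_of_ne ha hb]

theorem cN_swap {n : ℕ} (σ : Perm (Fin n)) (a b : Fin n) :
    cN σ ≤ cN (swap a b * σ) + 1 := by
  let φ : (Fin n → ℚ) →ₗ[ℚ] ℚ :=
    (LinearMap.proj a : (Fin n → ℚ) →ₗ[ℚ] ℚ) - LinearMap.proj b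
  have h1 : fixS σ ⊓ LinearMap.ker φ ≤ fixS (swap a b * σ) := by
    rintro f ⟨hf, hφ⟩ x
    have hab : f a = f b := by
      have : f a - f b = 0 := hφ
      linarith
    rw [Perm.mul_apply, fix_swap_aux hab]
    exact hf x
  have h2 := Submodule.finrank_mono h1
  have h3 := Submodule.finrank_sup_add_finrank_inf_eq (fixS σ) (LinearMap.ker φ)
  have h4 := LinearMap.finrank_range_add_finrank_ker φ
  have h5 := Submodule.finrank_le (LinearMap.range φ)
  have h6 := Submodule.finrank_le (fixS σ ⊔ LinearMap.ker φ)
  rw [Module.finrank_self] at h5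
  unfold cN
  omega

theorem peel {n : ℕ} (σ : Perm (Fin n)) (a b : Fin n) (hab : σ a = b) (hne : a ≠ b) :
    ∃ ρ : Perm (Fin n), σ = swap a b * ρ ∧ cN σ + 1 ≤ cN ρ ∧
      ∀ x y, σ x = y → y ≠ a → y ≠ b → ρ x = y := by
  refine ⟨swap a b * σ, by rw [swap_mul_self_mul], ?_, ?_⟩
  · have hlt : fixS σ < fixS (swap a b * σ) := by
      refine lt_of_le_of_ne ?_ ?_
      · intro f hf x
        have h : f a = f b := by rw [← hab]; exact (hf a).symm
        rw [Perm.mul_apply, fix_swap_aux h]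
        exact hf x
      · intro heq
        have hm : (Pi.single a 1 : Fin n → ℚ) ∈ fixS (swap a b * σ) := by
          intro x
          have : (swap a b * σ) a = a := by simp [hab]
          by_cases hx : x = a
          · rw [hx, this]
          · have h' : (swap a b * σ) x ≠ a := by
              intro h
              exact hx ((swap a b * σ).injective (h.trans this.symm))
            rw [Pi.single_eq_of_ne h', Pi.single_eq_of_ne hx]
        rw [← heq] at hm
        have := hm a
        rw [hab, Pi.single_eq_of_ne hne.symm, Pi.single_eq_same] at this
        exact zero_ne_one this
    exact Submodule.finrank_lt_finrank_of_lt hlt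
  · intro x y h1 h2 h3
    rw [Perm.mul_apply, h1, swap_apply_of_ne_of_ne h2 h3]

theorem cyc_pts {n : ℕ} {σ c : Perm (Fin n)} (hc : c ∈ σ.cycleFactorsFinset) (k : ℕ)
    (hk : k ≤ c.support.card) :
    ∃ ι : Fin k → Fin n, Function.Injective ι ∧ (∀ i, ι i ∈ c.support) ∧
      ∀ i j : Fin k, (j : ℕ) = i + 1 → σ (ι i) = ι j := by
  obtain ⟨hcyc, hcs⟩ := Perm.mem_cycleFactorsFinset_iff.1 hc
  obtain ⟨x, hx⟩ := hcyc.nonempty_support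
  have hon : c.IsCycleOn (c.support : Set (Fin n)) := by
    rw [Perm.coe_support_eq_set_support]
    exact hcyc.isCycleOn
  have hmem : ∀ i : ℕ, (c ^ i) x ∈ c.support := fun i => Perm.pow_apply_mem_support.2 hx
  refine ⟨fun i => (c ^ (i : ℕ)) x, ?_, fun i => hmem i, ?_⟩
  · intro i j hij
    have := (hon.pow_apply_eq_pow_apply hx).1 hij
    have := Nat.ModEq.eq_of_lt_of_lt this (by omega) (by omega)
    exact Fin.ext this
  · intro i j hij
    change σ ((c ^ (i : ℕ)) x) = (c ^ (j : ℕ)) x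
    rw [hij, pow_succ', Perm.mul_apply, hcs _ (hmem i)]

theorem not_special {n : ℕ} (σ : Perm (Fin n)) (h : ¬ IsSpecial σ) :
    (∃ ι : Fin 4 ↪ Fin n, σ (ι 0) = ι 1 ∧ σ (ι 1) = ι 2 ∧ σ (ι 2) = ι 3) ∨
    (∃ ι : Fin 6 ↪ Fin n, σ (ι 0) = ι 1 ∧ σ (ι 1) = ι 2 ∧ σ (ι 3) = ι 4 ∧ σ (ι 4) = ι 5) := by
  unfold IsSpecial at h
  rw [not_and_or] at h
  rcases h with h | h
  · left
    push Not at h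
    obtain ⟨i, hi, h4⟩ := h
    rw [Perm.cycleType_def, Multiset.mem_map] at hi
    obtain ⟨c, hc, rfl⟩ := hi
    obtain ⟨ι, hinj, -, hs⟩ := cyc_pts (σ := σ) (c := c) hc 4 h4
    exact ⟨⟨ι, hinj⟩, hs 0 1 rfl, hs 1 2 rfl, hs 2 3 rfl⟩
  · right
    rw [Perm.cycleType_def, Multiset.count_map, not_le] at h
    have h' : 1 < (σ.cycleFactorsFinset.filter
        (fun c => 3 = (Finset.card ∘ Perm.support) c)).card := h
    obtain ⟨c, hc, d, hd, hcd⟩ := Finset.one_lt_card.1 h'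
    rw [Finset.mem_filter] at hc hd
    have hdis := (Perm.cycleFactorsFinset_pairwise_disjoint σ hc.1 hd.1 hcd).disjoint_support
    obtain ⟨ι, hinj, hm, hs⟩ := cyc_pts hc.1 3 hc.2.le
    obtain ⟨κ, kinj, km, ks⟩ := cyc_pts hd.1 3 hd.2.le
    have hne : ∀ i j, ι i ≠ κ j := fun i j he =>
      Finset.disjoint_left.1 hdis (hm i) (he ▸ km j)
    refine ⟨⟨fun i : Fin (3 + 3) => Fin.append ι κ i, Fin.append_injective_iff.2 ⟨hinj, kinj, ?_⟩⟩, ?_⟩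
    · exact fun i j => hne i j
    · exact ⟨hs 0 1 rfl, hs 1 2 rfl, ks 0 1 rfl, ks 1 2 rfl⟩

theorem mem_special (n : ℕ) (σ : Perm (Fin n)) :
    permOp 2 n σ ∈ Submodule.span ℂ
        {f : Module.End ℂ ((Fin n → Fin 2) → ℂ) |
          ∃ τ : Equiv.Perm (Fin n), IsSpecial τ ∧ f = permOp 2 n τ} := by
  generalize hS : Submodule.span ℂ
        {f : Module.End ℂ ((Fin n → Fin 2) → ℂ) |
          ∃ τ : Equiv.Perm (Fin n), IsSpecial τ ∧ f = permOp 2 n τ} = S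
  induction hm : n - cN σ using Nat.strong_induction_on generalizing σ with
  | _ m ih =>
  have IH : ∀ τ, cN σ < cN τ → permOp 2 n τ ∈ S := by
    intro τ hτ
    have := cN_le τ
    exact ih (n - cN τ) (by omega) τ rfl
  by_cases hsp : IsSpecial σ
  · rw [← hS]
    exact Submodule.subset_span ⟨σ, hsp, rfl⟩
  let w : Perm (Fin n) → (Module.End ℂ ((Fin n → Fin 2) → ℂ)) ⧸ S :=
    fun g => S.mkQ (permOp 2 n g)
  have hw : SwRel w := by
    intro g h p q r h1 h2 h3
    have := congrArg S.mkQ (permOp_rel n g h p q r h1 h2 h3)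
    simpa only [map_add] using this
  have w0 : ∀ τ, w τ = 0 ↔ permOp 2 n τ ∈ S := fun τ => by
    simp only [w, Submodule.mkQ_apply, Submodule.Quotient.mk_eq_zero]
  rw [← w0]
  rcases not_special σ hsp with ⟨ι, h0, h1, h2⟩ | ⟨ι, h0, h1, h3, h4⟩
  · have ne : ∀ i j, i ≠ j → ι i ≠ ι j := fun i j h => ι.injective.ne h
    obtain ⟨ρ1, e1, c1, k1⟩ := peel σ _ _ h0 (ne _ _ (by decide))
    have a1 := k1 _ _ h1 (ne _ _ (by decide)) (ne _ _ (by decide))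
    have a2 := k1 _ _ h2 (ne _ _ (by decide)) (ne _ _ (by decide))
    obtain ⟨ρ2, e2, c2, k2⟩ := peel ρ1 _ _ a1 (ne _ _ (by decide))
    have b2 := k2 _ _ a2 (ne _ _ (by decide)) (ne _ _ (by decide))
    obtain ⟨ρ3, e3, c3, k3⟩ := peel ρ2 _ _ b2 (ne _ _ (by decide))
    have := four_gen w hw ρ3 (by
      intro a b c d
      rw [w0]
      apply IH
      have := cN_swap ρ3 c d
      have := cN_swap (swap c d * ρ3) a b
      rw [← mul_assoc] at this
      omega) ι
    rwa [mul_assoc, mul_assoc, ← e3, ← e2, ← e1] at this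
  · have ne : ∀ i j, i ≠ j → ι i ≠ ι j := fun i j h => ι.injective.ne h
    obtain ⟨ρ1, e1, c1, k1⟩ := peel σ _ _ h0 (ne _ _ (by decide))
    have a1 := k1 _ _ h1 (ne _ _ (by decide)) (ne _ _ (by decide))
    have a3 := k1 _ _ h3 (ne _ _ (by decide)) (ne _ _ (by decide))
    have a4 := k1 _ _ h4 (ne _ _ (by decide)) (ne _ _ (by decide))
    obtain ⟨ρ2, e2, c2, k2⟩ := peel ρ1 _ _ a1 (ne _ _ (by decide))
    have b3 := k2 _ _ a3 (ne _ _ (by decide)) (ne _ _ (by decide))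
    have b4 := k2 _ _ a4 (ne _ _ (by decide)) (ne _ _ (by decide))
    obtain ⟨ρ3, e3, c3, k3⟩ := peel ρ2 _ _ b3 (ne _ _ (by decide))
    have d4 := k3 _ _ b4 (ne _ _ (by decide)) (ne _ _ (by decide))
    obtain ⟨ρ4, e4, c4, k4⟩ := peel ρ3 _ _ d4 (ne _ _ (by decide))
    have := six_gen w hw ρ4 (by
      intro a b c d e f
      rw [w0]
      apply IH
      have u1 := cN_swap ρ4 e f
      have u2 := cN_swap (swap e f * ρ4) c d
      have u3 := cN_swap (swap c d * (swap e f * ρ4)) a b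
      rw [mul_assoc, mul_assoc]
      omega) ι
    rwa [mul_assoc, mul_assoc, mul_assoc, ← e4, ← e3, ← e2, ← e1] at this

/-- For every `n`, the swap algebra `Σₙ` (`dim V = 2`) is spanned by the operators
induced by special permutations. -/
theorem swapAlgebra_spanned_by_special (n : ℕ) :
    Submodule.span ℂ (Set.range (permOp 2 n)) =
      Submodule.span ℂ
        {f : Module.End ℂ ((Fin n → Fin 2) → ℂ) |
          ∃ τ : Equiv.Perm (Fin n), IsSpecial τ ∧ f = permOp 2 n τ} := by
  apply le_antisymm
  · rw [Submodule.span_le]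
    rintro _ ⟨σ, rfl⟩
    exact mem_special n σ
  · apply Submodule.span_mono
    rintro _ ⟨τ, -, rfl⟩
    exact ⟨τ, rfl⟩
end
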